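/- For every integer d ≥ 1, every subset of ℕ^d of size (d+1)! − 1 is coverable; consequently h(ℕ^d) ≥ (d+1)! − 1. -/

import Mathlib

/-- A winning guessing strategy in the hat guessing game on `G` with `q` colors:
each vertex `v` gets a guessing function from colorings of its open neighborhood
to colors, such that for every coloring some vertex guesses its own color. -/
def HatWinning {V : Type*} (G : SimpleGraph V) (q : ℕ) : Prop :=
  ∃ g : (v : V) → ({w : V // G.Adj v w} → Fin q) → Fin q,
    ∀ χ : V → Fin q, ∃ v : V, g v (fun w => χ w.1) = χ v

/-- The hat guessing number of `G`: the largest number of colors for which the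
players have a winning strategy. -/
noncomputable def hatGuessingNumber {V : Type*} (G : SimpleGraph V) : ℕ :=
  sSup {q : ℕ | HatWinning G q}

/-- Sylvester's sequence: `s 0 = 2`, `s (n+1) = s n ^ 2 - s n + 1`. -/
def sylvester : ℕ → ℕ
  | 0 => 2
  | n + 1 => sylvester n ^ 2 - sylvester n + 1

/-- The graph `G_d(N)`: vertices are the vertices of the complete rooted `N`-ary
tree of depth `d` (encoded as lists of child-indices of length at most `d`), and
each vertex is adjacent to all of its ancestors (its proper prefixes). -/
def ancTree (d N : ℕ) : SimpleGraph {l : List (Fin N) // l.length ≤ d} where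
  Adj v w := v ≠ w ∧ (v.1 <+: w.1 ∨ w.1 <+: v.1)
  symm := by
    constructor
    intro v w h
    exact ⟨h.1.symm, h.2.symm⟩
  loopless := by
    constructor
    intro v h
    exact h.1 rfl

/-- The book graph `B_{d,n}`: a spine of `d` vertices forming a clique, completely
joined to `n` pages forming an independent set. -/
def bookGraph (d n : ℕ) : SimpleGraph (Fin d ⊕ Fin n) where
  Adj x y := x ≠ y ∧ (x.isLeft ∨ y.isLeft)
  symm := by
    constructor
    intro x y h
    exact ⟨h.1.symm, h.2.symm⟩
  loopless := by
    constructor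
    intro x h
    exact h.1 rfl

/-- A set `S ⊆ ℕ^d` is coverable if it can be partitioned into parts `S_1, …, S_d`
such that `S_i` contains at most one point on every line parallel to the `i`-th
coordinate axis, i.e. two distinct points in part `i` differ in some coordinate
other than the `i`-th. -/
def Coverable {d : ℕ} (S : Set (Fin d → ℕ)) : Prop :=
  ∃ f : (Fin d → ℕ) → Fin d, ∀ x ∈ S, ∀ y ∈ S,
    x ≠ y → f x = f y → ∃ j : Fin d, j ≠ f x ∧ x j ≠ y j

/-- `hcov d` is `h(ℕ^d)`: the largest `t` such that every `t`-element subset of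
`ℕ^d` is coverable. -/
noncomputable def hcov (d : ℕ) : ℕ :=
  sSup {t : ℕ | ∀ S : Set (Fin d → ℕ), S.Finite → S.ncard = t → Coverable S}

/-- `p` is a left-to-right path with `k` edges in a graph on `Fin n` with the
natural vertex ordering: a strictly increasing sequence of `k+1` vertices in which
consecutive vertices are adjacent. -/
def IsLTRPath {n : ℕ} (G : SimpleGraph (Fin n)) (k : ℕ) (p : Fin (k + 1) → Fin n) : Prop :=
  StrictMono p ∧ ∀ i : Fin k, G.Adj (p i.castSucc) (p i.succ)

/-- The depth of a vertex `v`: the largest number of edges in a left-to-right path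
ending at `v`. -/
noncomputable def ltrDepth {n : ℕ} (G : SimpleGraph (Fin n)) (v : Fin n) : ℕ :=
  sSup {k : ℕ | ∃ p : Fin (k + 1) → Fin n, IsLTRPath G k p ∧ p (Fin.last k) = v}

/-! Fix a set `I` of `n` allowed directions. If every coordinate in `I` takes at most `n` values on
`S`, label those values injectively by `ZMod n` and colour a point by the sum of its labels: two
points with equal sums cannot differ in exactly one coordinate of `I`. Otherwise some coordinate
`i ∈ I` takes more than `n` values, so if `S` has fewer than `(n + 1)! = (n + 1) * n!` points, then
some nonempty slice `x i = c` has fewer than `n!` points. By induction that slice can be coloured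
without direction `i`, and such a colouring never conflicts with a colouring of the rest of `S`,
since points inside and outside the slice differ in coordinate `i`.

The supremum defining `hcov d` is finite because a grid of side `m > d` is not coverable: each part
contains at most a fraction `1 / m` of it. -/

section AxisColoring

variable {ι : Type*} {α : ι → Type*}

/-- An assignment `f` of axis directions to points is an axis colouring of `S` if each line parallel
to axis `i` contains at most one point of `S` of colour `i`. For `S ⊆ ℕ^d`, the set `S` is
`Coverable` exactly when it has an axis colouring; `f` is total, and its values outside `S` are
irrelevant. -/
def IsAxisColoring (f : (∀ i, α i) → ι) (S : Set (∀ i, α i)) : Prop :=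
  S.Pairwise fun x y => f x = f y → ∃ j, j ≠ f x ∧ x j ≠ y j

namespace IsAxisColoring

variable {f g : (∀ i, α i) → ι} {S T : Set (∀ i, α i)}

lemma mono (hf : IsAxisColoring f T) (hST : S ⊆ T) : IsAxisColoring f S :=
  Set.Pairwise.mono hST hf

lemma eq_of_eq_off (hf : IsAxisColoring f S) {x y : ∀ i, α i} (hx : x ∈ S) (hy : y ∈ S)
    (hxy : f x = f y) (hoff : ∀ j, j ≠ f x → x j = y j) : x = y := by
  by_contra hne
  obtain ⟨j, hj, hne_j⟩ := hf hx hy hne hxy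
  exact hne_j (hoff j hj)

lemma piecewise {i : ι} {V : Set (α i)} [DecidablePred (· ∈ Function.eval i ⁻¹' V)]
    (hf : IsAxisColoring f (S ∩ Function.eval i ⁻¹' V))
    (hfi : ∀ x ∈ S ∩ Function.eval i ⁻¹' V, f x ≠ i)
    (hg : IsAxisColoring g (S \ Function.eval i ⁻¹' V)) :
    IsAxisColoring ((Function.eval i ⁻¹' V).piecewise f g) S := by
  intro x hx y hy hxy hcol
  by_cases hxV : x i ∈ V <;> by_cases hyV : y i ∈ V <;>
    simp only [Set.piecewise, Set.mem_preimage, Function.eval, hxV, hyV, if_true, if_false]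
      at hcol ⊢
  · exact hf ⟨hx, hxV⟩ ⟨hy, hyV⟩ hxy hcol
  · exact ⟨i, (hfi x ⟨hx, hxV⟩).symm, fun h => hyV (h ▸ hxV)⟩
  · exact ⟨i, hcol ▸ (hfi y ⟨hy, hyV⟩).symm, fun h => hxV (h ▸ hyV)⟩
  · exact hg ⟨hx, hxV⟩ ⟨hy, hyV⟩ hxy hcol

end IsAxisColoring

lemma isAxisColoring_sum {G : Type*} [AddCancelCommMonoid G] {I : Finset ι}
    {S : Set (∀ i, α i)} {φ : ∀ i, α i → G} (hφ : ∀ i ∈ I, Set.InjOn (φ i) (Function.eval i '' S))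
    {e : G → ι} (he : Function.Injective e) (heI : ∀ a, e a ∈ I) :
    IsAxisColoring (fun x => e (∑ i ∈ I, φ i (x i))) S := by
  classical
  intro x hx y hy hxy hcol
  by_contra! hoff
  set k := e (∑ i ∈ I, φ i (x i))
  have hk : k ∈ I := heI _
  have hsum : ∑ i ∈ I, φ i (x i) = ∑ i ∈ I, φ i (y i) := he hcol
  have hrest : ∑ i ∈ I.erase k, φ i (x i) = ∑ i ∈ I.erase k, φ i (y i) :=
    Finset.sum_congr rfl fun i hi => by rw [hoff i (Finset.ne_of_mem_erase hi)]
  rw [← Finset.add_sum_erase I _ hk, ← Finset.add_sum_erase I _ hk, hrest] at hsum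
  have hxy_k : x k = y k :=
    hφ k hk (Set.mem_image_of_mem _ hx) (Set.mem_image_of_mem _ hy) (add_right_cancel hsum)
  refine hxy (funext fun j => ?_)
  obtain rfl | hj := eq_or_ne j k
  exacts [hxy_k, hoff j hj]

lemma exists_isAxisColoring_of_encard_eval_image_le {I : Finset ι} (hI : I.Nonempty)
    {S : Set (∀ i, α i)} (hS : ∀ i ∈ I, (Function.eval i '' S).encard ≤ I.card) :
    ∃ f : (∀ i, α i) → ι, (∀ x, f x ∈ I) ∧ IsAxisColoring f S := by
  have : NeZero I.card := ⟨hI.card_ne_zero⟩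
  have exists_label (i : ι) (hi : i ∈ I) :
      ∃ φ : α i → ZMod I.card, Set.InjOn φ (Function.eval i '' S) := by
    have hcard : (Function.eval i '' S).encard ≤ (Set.univ : Set (ZMod I.card)).encard := by
      simpa using hS i hi
    obtain ⟨φ, -, hφ⟩ := (Set.finite_of_encard_le_coe (hS i hi)).exists_injOn_of_encard_le hcard
    exact ⟨φ, hφ⟩
  choose! φ hφ using exists_label
  let e : ZMod I.card ≃ I := Fintype.equivOfCardEq (by simp [ZMod.card])
  exact ⟨_, fun _ => (e _).2,
    isAxisColoring_sum hφ (Subtype.val_injective.comp e.injective) fun a => (e a).2⟩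

lemma exists_card_fiber_lt_factorial {β γ : Type*} [DecidableEq γ] {n : ℕ} {S : Finset β}
    {π : β → γ} (hS : S.card < (n + 1).factorial) (hπ : n < (S.image π).card) :
    ∃ c ∈ S.image π, (S.filter (π · = c)).card < n.factorial := by
  refine Finset.exists_card_fiber_lt_of_card_lt_mul (hS.trans_le ?_)
  rw [Nat.factorial_succ]
  exact Nat.mul_le_mul_right _ hπ

theorem exists_isAxisColoring_of_card_lt_factorial [Nonempty ι] (I : Finset ι)
    (S : Finset (∀ i, α i)) (hS : S.card < (I.card + 1).factorial) :
    ∃ f : (∀ i, α i) → ι, (∀ x ∈ S, f x ∈ I) ∧ IsAxisColoring f (S : Set (∀ i, α i)) := by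
  classical
  induction I using Finset.eraseInduction generalizing S with | H I ih_directions
  induction S using Finset.strongInduction with | H S ih_points
  obtain rfl | hI := I.eq_empty_or_nonempty
  · obtain rfl : S = ∅ := by simpa using hS
    exact ⟨fun _ => Classical.arbitrary ι, by simp, by simp [IsAxisColoring]⟩
  by_cases hvalues : ∀ i ∈ I, (S.image (Function.eval i)).card ≤ I.card
  · obtain ⟨f, hfI, hf⟩ := exists_isAxisColoring_of_encard_eval_image_le hI
      (S := (S : Set (∀ i, α i))) fun i hi => by
        rw [← Finset.coe_image, Set.encard_coe_eq_coe_finsetCard]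
        exact_mod_cast hvalues i hi
    exact ⟨f, fun x _ => hfI x, hf⟩
  push Not at hvalues
  obtain ⟨i, hi, hmany⟩ := hvalues
  obtain ⟨c, hc, hslice⟩ := exists_card_fiber_lt_factorial hS hmany
  obtain ⟨z, hz, hzc⟩ := Finset.mem_image.1 hc
  have hrest : S.filter (¬ · i = c) ⊂ S := Finset.filter_ssubset.2 ⟨z, hz, not_not.2 hzc⟩
  obtain ⟨f, hfI, hf⟩ := ih_directions i hi (S.filter (· i = c))
    (by rwa [Finset.card_erase_add_one hi])
  obtain ⟨g, hgI, hg⟩ := ih_points _ hrest ((Finset.card_lt_card hrest).trans hS)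
  simp only [Finset.mem_filter, Finset.mem_erase, and_imp] at hfI hgI
  rw [Finset.coe_filter] at hf hg
  refine ⟨(Function.eval i ⁻¹' {c}).piecewise f g, fun x hx => ?_,
    hf.piecewise (fun x hx => (hfI x hx.1 hx.2).1) hg⟩
  by_cases hxc : x i = c
  · simpa [Set.piecewise, hxc] using (hfI x hx hxc).2
  · simpa [Set.piecewise, hxc] using hgI x hx hxc

section Grid

variable [Fintype ι] [DecidableEq ι] {f : (∀ i, α i) → ι} {t : ∀ i, Finset (α i)}

lemma IsAxisColoring.card_fiber_mul_card_le
    (hf : IsAxisColoring f (Fintype.piFinset t : Set (∀ i, α i))) (i : ι) :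
    ((Fintype.piFinset t).filter (f · = i)).card * (t i).card ≤ (Fintype.piFinset t).card := by
  rw [← Finset.card_product]
  refine Finset.card_le_card_of_injOn (fun p => Function.update p.1 i p.2) ?_ ?_
  · rintro ⟨x, a⟩ hp
    simp only [Finset.coe_product, Set.mem_prod, Finset.mem_coe, Finset.mem_filter,
      Fintype.mem_piFinset] at hp ⊢
    intro j
    obtain rfl | hj := eq_or_ne j i
    · simpa using hp.2
    · simpa [hj] using hp.1.1 j
  · rintro ⟨x, a⟩ hp ⟨y, b⟩ hq heq
    simp only [Finset.coe_product, Set.mem_prod, Finset.mem_coe, Finset.mem_filter] at hp hq heq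
    obtain ⟨⟨hx, rfl⟩, -⟩ := hp
    obtain ⟨⟨hy, hfy⟩, -⟩ := hq
    have hab : a = b := by simpa using congrFun heq (f x)
    have hxy : x = y :=
      hf.eq_of_eq_off hx hy hfy.symm fun j hj => by simpa [hj] using congrFun heq j
    exact Prod.ext hxy hab

theorem not_isAxisColoring_piFinset (ht : ∀ i, Fintype.card ι < (t i).card) :
    ¬ IsAxisColoring f (Fintype.piFinset t : Set (∀ i, α i)) := by
  intro hf
  set B := Fintype.piFinset t
  have hB : 0 < B.card :=
    Finset.card_pos.2 <| Fintype.piFinset_nonempty.2 fun i =>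
      Finset.card_pos.1 ((Nat.zero_le _).trans_lt (ht i))
  refine (Nat.mul_lt_mul_of_pos_left (Fintype.card ι).lt_succ_self hB).not_ge ?_
  calc B.card * (Fintype.card ι + 1)
      = ∑ i, (B.filter (f · = i)).card * (Fintype.card ι + 1) := by
        rw [← Finset.sum_mul, ← Finset.card_eq_sum_card_fiberwise fun x _ => by simp]
    _ ≤ ∑ _i : ι, B.card := Finset.sum_le_sum fun i _ =>
        (Nat.mul_le_mul_left _ (ht i)).trans (hf.card_fiber_mul_card_le i)
    _ = B.card * Fintype.card ι := by
        rw [Finset.sum_const, Finset.card_univ, smul_eq_mul, mul_comm]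

end Grid

end AxisColoring

lemma bddAbove_forall_ncard_eq_coverable {d : ℕ} (hd : 1 ≤ d) :
    BddAbove {t : ℕ | ∀ S : Set (Fin d → ℕ), S.Finite → S.ncard = t → Coverable S} := by
  have : Nonempty (Fin d) := ⟨⟨0, hd⟩⟩
  let grid : Finset (Fin d → ℕ) := Fintype.piFinset fun _ => Finset.range (d + 1)
  refine ⟨grid.card, fun t ht => ?_⟩
  by_contra! hlt
  obtain ⟨S, hgrid, rfl⟩ := Infinite.exists_superset_card_eq grid t hlt.le
  obtain ⟨f, hf⟩ : ∃ f, IsAxisColoring f (S : Set (Fin d → ℕ)) :=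
    ht S S.finite_toSet (Set.ncard_coe_finset S)
  exact not_isAxisColoring_piFinset (by simp) (hf.mono (Finset.coe_subset.2 hgrid))

/-- Lower bound of Lemma 6: every subset of `ℕ^d` of size `(d+1)! - 1` is
coverable; consequently `h(ℕ^d) ≥ (d+1)! - 1`. -/
theorem hcov_ge_factorial (d : ℕ) (hd : 1 ≤ d) :
    (∀ S : Set (Fin d → ℕ), S.Finite → S.ncard = (d + 1).factorial - 1 → Coverable S) ∧
      (d + 1).factorial - 1 ≤ hcov d := by
  have : Nonempty (Fin d) := ⟨⟨0, hd⟩⟩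
  have coverable_of_ncard_eq (S : Set (Fin d → ℕ)) (hfin : S.Finite)
      (hcard : S.ncard = (d + 1).factorial - 1) : Coverable S := by
    lift S to Finset (Fin d → ℕ) using hfin
    rw [Set.ncard_coe_finset] at hcard
    have hlt : S.card < ((Finset.univ : Finset (Fin d)).card + 1).factorial := by
      rw [Finset.card_fin, hcard]
      exact Nat.sub_one_lt (d + 1).factorial_ne_zero
    obtain ⟨f, -, hf⟩ := exists_isAxisColoring_of_card_lt_factorial Finset.univ S hlt
    exact ⟨f, hf⟩
  exact ⟨coverable_of_ncard_eq,
    le_csSup (bddAbove_forall_ncard_eq_coverable hd) coverable_of_ncard_eq⟩
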